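/- Let N ∈ ℕ, let D > 0 and c ≥ 0 be real numbers, and let S : ℕ → ℝ satisfy |S_i − S_{i−1}| ≤ c for every 1 ≤ i ≤ N. Let τ be the least n ≤ N such that |S_n − S_0| ≥ D, and τ := N if no such n exists. Define the capital process I_n := 1 − (2/(D+c)²)·Σ_{i=1}^{min(n,τ)} (S_{i−1} − S_0)·(S_i − S_{i−1}). Then: (i) I_n ≥ 0 for every n ≤ N; (ii) I_N ≥ (1/(D+c)²)·Σ_{i=1}^{min(N,τ)} (S_i − S_{i−1})²; and in particular (iii) if |S_n − S_0| < D for every n ≤ N, then I_N ≥ (1/(D+c)²)·Σ_{i=1}^{N} (S_i − S_{i−1})². (Stopped high-volatility strategy under a bound c on the price jumps: without any a priori assumption on the path, the strategy that shorts −(2/(D+c)²)·(S_{n−1} − S_0) units and stops as soon as the price moves by D never goes bankrupt, and it makes the capital at least the accumulated quadratic variation divided by (D+c)² as long as the price stays within D of its starting value.) -/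

import Mathlib

/-!
Summation by parts gives
`2 ∑_{i<m} (S_i - S_0)(S_{i+1} - S_i) = (S_m - S_0)² - ∑_{i<m} (S_{i+1} - S_i)²`
(`two_mul_sum_eq`), so the capital at time `n` equals
`1 + (∑_{i<m} (S_{i+1} - S_i)² - (S_m - S_0)²) / (D + c)²` with `m = min n τ`.
Before `τ` the price is within `D` of `S_0`, so after one more jump of size at most `c` it is
within `D + c` (`abs_stopped_le`). Hence `(S_m - S_0)² ≤ (D + c)²`, and the capital dominates the
normalized quadratic variation (`quadVar_le_capHigh`), which is nonnegative.
-/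

open Classical in
/-- The first time `n ≤ N` at which `|g n| ≥ D`; equal to `N` if there is no such time. -/
noncomputable def hitTime (g : ℕ → ℝ) (D : ℝ) (N : ℕ) : ℕ :=
  if h : ∃ n, n ≤ N ∧ D ≤ |g n| then Nat.find h else N

/-- The capital process of the speculator starting from 1 who bets
`M_i = -(2/(D+c)²)(S_{i-1} - S_0)` for `i ≤ τ` and `M_i = 0` for `i > τ`, where `τ` is
the first time `n ≤ N` at which `|S_n - S_0| ≥ D` (and `τ = N` if there is none). -/
noncomputable def capHigh (S : ℕ → ℝ) (D c : ℝ) (N n : ℕ) : ℝ :=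
  1 - (2 / (D + c) ^ 2) *
      ∑ i ∈ Finset.range (min n (hitTime (fun k => S k - S 0) D N)),
        (S i - S 0) * (S (i + 1) - S i)

theorem two_mul_sum_eq (S : ℕ → ℝ) (m : ℕ) :
    2 * ∑ i ∈ Finset.range m, (S i - S 0) * (S (i + 1) - S i) =
      (S m - S 0) ^ 2 - ∑ i ∈ Finset.range m, (S (i + 1) - S i) ^ 2 := by
  induction m with
  | zero => simp
  | succ k ih =>
    rw [Finset.sum_range_succ, Finset.sum_range_succ, mul_add, ih]
    ring

theorem abs_lt_of_lt_hitTime {g : ℕ → ℝ} {D : ℝ} {N k : ℕ} (hkN : k ≤ N)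
    (hk : k < hitTime g D N) : |g k| < D := by
  classical
  unfold hitTime at hk
  split_ifs at hk with h
  · by_contra hlt
    exact Nat.find_min h hk ⟨hkN, not_lt.mp hlt⟩
  · by_contra hlt
    exact h ⟨k, hkN, not_lt.mp hlt⟩

theorem hitTime_eq_of_forall_lt {g : ℕ → ℝ} {D : ℝ} {N : ℕ} (h : ∀ n ≤ N, |g n| < D) :
    hitTime g D N = N := by
  unfold hitTime
  rw [dif_neg]
  rintro ⟨n, hn, hD⟩
  exact absurd (h n hn) (not_lt.mpr hD)

/-- Up to and including the stopping time, the price is within `D + c` of its initial value. -/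
theorem abs_stopped_le {N : ℕ} {D c : ℝ} (hD : 0 < D) (hc : 0 ≤ c) {S : ℕ → ℝ}
    (hjump : ∀ i < N, |S (i + 1) - S i| ≤ c) {m : ℕ} (hmN : m ≤ N)
    (hm : m ≤ hitTime (fun k => S k - S 0) D N) : |S m - S 0| ≤ D + c := by
  cases m with
  | zero => simpa using add_nonneg hD.le hc
  | succ k =>
    have h1 : |S k - S 0| < D :=
      abs_lt_of_lt_hitTime (g := fun k => S k - S 0) (N := N) (by omega) (by omega)
    have h2 := hjump k (by omega)
    have h3 := abs_sub_le (S (k + 1)) (S k) (S 0)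
    linarith

/-- At every time `n ≤ N`, the capital dominates the normalized quadratic variation accumulated
up to the stopping time. -/
theorem quadVar_le_capHigh {N : ℕ} {D c : ℝ} (hD : 0 < D) (hc : 0 ≤ c) {S : ℕ → ℝ}
    (hjump : ∀ i < N, |S (i + 1) - S i| ≤ c) {n : ℕ} (hn : n ≤ N) :
    (1 / (D + c) ^ 2) *
        ∑ i ∈ Finset.range (min n (hitTime (fun k => S k - S 0) D N)),
          (S (i + 1) - S i) ^ 2 ≤ capHigh S D c N n := by
  unfold capHigh
  have hm := abs_stopped_le hD hc hjump ((min_le_left n _).trans hn) (min_le_right n _)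
  generalize min n (hitTime (fun k => S k - S 0) D N) = m at hm ⊢
  have hpos : 0 < (D + c) ^ 2 := by positivity
  have hsq : (S m - S 0) ^ 2 ≤ (D + c) ^ 2 := sq_le_sq' (abs_le.mp hm).1 (abs_le.mp hm).2
  have hle : (S m - S 0) ^ 2 / (D + c) ^ 2 ≤ 1 := (div_le_one hpos).mpr hsq
  rw [div_mul_eq_mul_div, div_mul_eq_mul_div, two_mul_sum_eq, sub_div, one_mul]
  linarith

/-- Stopped high-volatility strategy under a bound `c` on the price jumps: without any
a priori assumption on the path, the strategy that shorts `(2/(D+c)²)(S_{n-1} - S_0)`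
units and stops as soon as the price moves by `D` never goes bankrupt; its final capital
is at least the accumulated quadratic variation up to the stopping time divided by
`(D+c)²`, and in particular at least the full accumulated quadratic variation divided by
`(D+c)²` as long as the price stays within `D` of its starting value. -/
theorem high_volatility_stopped (N : ℕ) (D c : ℝ) (hD : 0 < D) (hc : 0 ≤ c)
    (S : ℕ → ℝ) (hjump : ∀ i < N, |S (i + 1) - S i| ≤ c) :
    (∀ n ≤ N, 0 ≤ capHigh S D c N n) ∧
      ((1 / (D + c) ^ 2) *
          ∑ i ∈ Finset.range (min N (hitTime (fun k => S k - S 0) D N)),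
            (S (i + 1) - S i) ^ 2 ≤ capHigh S D c N N) ∧
      ((∀ n ≤ N, |S n - S 0| < D) →
        (1 / (D + c) ^ 2) * ∑ i ∈ Finset.range N, (S (i + 1) - S i) ^ 2 ≤
          capHigh S D c N N) := by
  refine ⟨fun n hn => ?_, quadVar_le_capHigh hD hc hjump le_rfl, fun hlt => ?_⟩
  · refine le_trans ?_ (quadVar_le_capHigh hD hc hjump hn)
    exact mul_nonneg (by positivity) (Finset.sum_nonneg fun i _ => sq_nonneg _)
  · have h := quadVar_le_capHigh hD hc hjump (le_refl N)
    rwa [hitTime_eq_of_forall_lt (g := fun k => S k - S 0) hlt, min_self] at h
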